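/- arXiv:1408.2639 — 2 statements merged into one kernel-verified Lean document; each statement's English description precedes it below -/
import Mathlib

section
/- Let G be a consistently edge-labelled graph. Then G has an interval representation consistent with its labelling if and only if G contains no Δ-invertible pair. -/
/-!
Why the equivalence holds.  Call a pair *free* if it is not an inclusion edge.  In a
representation the members of a free pair are ordered from left to right, and the avoidance
condition says exactly that this order is carried along by the walks; so an invertible pair would
lie in both orders (`not_invertible_of_rep`).

Conversely, avoiding walks decompose into elementary steps in which only one coordinate moves, and
these generate an equivalence relation `Forces` on ordered free pairs.  Without invertible pairs no
class equals its inverse, so one of each class and its inverse can be chosen as "left of".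
The only obstruction is a cyclic triangle of chosen pairs; such a triangle is *rainbow*
(no two sides at a common vertex force each other), and then the triangle lemma
`Rainbow.replace` holds: as in Gallai's theory of transitive orientations, a side may be replaced by
any pair it forces without changing the classes of the other sides.  Choosing for each class and its
inverse the one that contains a pair starting at their smallest vertex therefore
leaves no cyclic triangle (`Left.acyclic`).

Together with the given orientation of the inclusion edges by containment, the chosen orientation
yields a linear order of the left endpoints, one of the right endpoints, and a consistent merging
of both (`endLt`); the ranks in this order are the endpoints of a representation (`exists_rep`).
-/

/-!
Graphs here are finite, undirected, without parallel edges, and have a loop at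
every vertex.  We model them as symmetric reflexive relations.
-/

structure LoopGraph (V : Type) where
  Adj : V → V → Prop
  symm : ∀ u v, Adj u v → Adj v u
  refl : ∀ u, Adj u u

namespace LoopGraph

variable {V W : Type}

/-- Closed neighbourhood `N[u]`. -/
def nbhd (G : LoopGraph V) (u : V) : Set V := {v | G.Adj u v}

/-- `u` is a universal vertex. -/
def Universal (G : LoopGraph V) (u : V) : Prop := ∀ v, G.Adj u v

/-- `u ≠ v` are true twins if `N[u] = N[v]`. -/
def TrueTwins (G : LoopGraph V) (u v : V) : Prop := u ≠ v ∧ G.nbhd u = G.nbhd v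

/-- `uv` is an inclusion edge: it is an edge and `N[u] ⊆ N[v]` or `N[v] ⊆ N[u]`. -/
def InclusionEdge (G : LoopGraph V) (u v : V) : Prop :=
  G.Adj u v ∧ (G.nbhd u ⊆ G.nbhd v ∨ G.nbhd v ⊆ G.nbhd u)

/-- `u` overlaps `v`: they are adjacent and their closed neighbourhoods are incomparable. -/
def Overlaps (G : LoopGraph V) (u v : V) : Prop :=
  G.Adj u v ∧ ¬ G.nbhd u ⊆ G.nbhd v ∧ ¬ G.nbhd v ⊆ G.nbhd u

/-- `{u,v}` is a spanning pair. -/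
def SpanningPair (G : LoopGraph V) (u v : V) : Prop :=
  (∀ x, ¬ G.Adj v x → G.nbhd x ⊆ G.nbhd u) ∧
  (∀ y, ¬ G.Adj u y → G.nbhd y ⊆ G.nbhd v)

/-- `uv` is a 2-overlap edge: an overlap edge forming a spanning pair. -/
def TwoOverlapEdge (G : LoopGraph V) (u v : V) : Prop :=
  G.Overlaps u v ∧ G.SpanningPair u v

/-- `uv` is a 1-overlap edge: an overlap edge not forming a spanning pair. -/
def OneOverlapEdge (G : LoopGraph V) (u v : V) : Prop :=
  G.Overlaps u v ∧ ¬ G.SpanningPair u v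

/-- `{u,v}` is a circular pair: a non-adjacent spanning pair. -/
def CircularPair (G : LoopGraph V) (u v : V) : Prop :=
  G.SpanningPair u v ∧ ¬ G.Adj u v

/-- Every vertex belongs to some circular pair. -/
def CircularlyPaired (G : LoopGraph V) : Prop := ∀ u, ∃ v, G.CircularPair u v

/-- A walk with `k` edges: vertices `P 0, …, P k` with consecutive vertices adjacent. -/
def IsWalk (G : LoopGraph V) (k : ℕ) (P : ℕ → V) : Prop :=
  ∀ i < k, G.Adj (P i) (P (i + 1))

/-- Vertex `z` avoids the edge `ab`: every neighbour of `z` among `a, b` overlaps `z`,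
and if `z` overlaps both `a` and `b` then `a, b` do not overlap each other. -/
def AvoidsEdge (G : LoopGraph V) (z a b : V) : Prop :=
  (G.Adj z a → G.Overlaps z a) ∧ (G.Adj z b → G.Overlaps z b) ∧
  (G.Overlaps z a → G.Overlaps z b → ¬ G.Overlaps a b)

/-- Vertex `z` and the walk `P` (with `k` edges) avoid each other. -/
def AvoidsWalk (G : LoopGraph V) (z : V) (k : ℕ) (P : ℕ → V) : Prop :=
  (∀ i ≤ k, G.Adj z (P i) → G.Overlaps z (P i)) ∧
  (∀ i < k, G.Overlaps z (P i) → G.Overlaps z (P (i + 1)) →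
    ¬ G.Overlaps (P i) (P (i + 1)))

/-- The walks `P` and `Q` (both with `k` edges) avoid each other. -/
def WalksAvoid (G : LoopGraph V) (k : ℕ) (P Q : ℕ → V) : Prop :=
  ∀ i < k, G.AvoidsEdge (P i) (Q i) (Q (i + 1)) ∧ G.AvoidsEdge (Q (i + 1)) (P i) (P (i + 1))

/-- `{x,y}` is a `z`-invertible pair, i.e. an invertible pair anchored at `z`. -/
def ZInvertiblePair (G : LoopGraph V) (z x y : V) : Prop :=
  x ≠ y ∧ x ≠ z ∧ y ≠ z ∧
  ∃ k, ∃ P Q : ℕ → V, G.IsWalk k P ∧ G.IsWalk k Q ∧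
    P 0 = x ∧ P k = y ∧ Q 0 = y ∧ Q k = x ∧
    G.WalksAvoid k P Q ∧ G.AvoidsWalk z k P ∧ G.AvoidsWalk z k Q

/-- `G` contains an anchored invertible pair. -/
def HasAnchoredInvertiblePair (G : LoopGraph V) : Prop :=
  ∃ z x y, G.ZInvertiblePair z x y

end LoopGraph

/-!
Circular arcs: the circle is modelled as the half-open interval `[0,1)`;
an arc is described by its left and right endpoints (clockwise = increasing),
wrapping around if necessary.
-/

/-- Membership of the point `t` in the clockwise arc from `l` to `r`. -/
def arcMem (l r t : ℝ) : Prop :=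
  (l ≤ r ∧ l ≤ t ∧ t ≤ r) ∨ (r < l ∧ (l ≤ t ∨ t ≤ r))

/-- The arc `[l₁,r₁]` is contained in the arc `[l₂,r₂]`. -/
def arcSubset (l₁ r₁ l₂ r₂ : ℝ) : Prop :=
  ∀ t ∈ Set.Ico (0 : ℝ) 1, arcMem l₁ r₁ t → arcMem l₂ r₂ t

/-- The arc `[lu,ru]` properly contains the arc `[lv,rv]`. -/
def arcProperContains (lu ru lv rv : ℝ) : Prop :=
  arcSubset lv rv lu ru ∧ ¬ arcSubset lu ru lv rv

/-- The arcs `[lu,ru]` and `[lv,rv]` together cover the whole circle. -/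
def arcsCover (lu ru lv rv : ℝ) : Prop :=
  ∀ t ∈ Set.Ico (0 : ℝ) 1, arcMem lu ru t ∨ arcMem lv rv t

/-- `b` lies strictly between `a` and `c` in the clockwise cyclic order on `[0,1)`. -/
def cycBtw (a b c : ℝ) : Prop :=
  (a < b ∧ b < c) ∨ (b < c ∧ c < a) ∨ (c < a ∧ a < b)

/-- The four points `a, b, c, d` of `[0,1)` occur in this clockwise cyclic order. -/
def cyc4 (a b c d : ℝ) : Prop := cycBtw a b c ∧ cycBtw a c d

namespace LoopGraph

variable {V W : Type}

/-- `(l, r)` is a circular-arc representation of `G`: all endpoints are distinct and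
two vertices are adjacent iff their arcs intersect. -/
def IsCARep (G : LoopGraph V) (l r : V → ℝ) : Prop :=
  (∀ v, l v ∈ Set.Ico (0 : ℝ) 1) ∧ (∀ v, r v ∈ Set.Ico (0 : ℝ) 1) ∧
  Function.Injective (Sum.elim l r) ∧
  ∀ u v, (G.Adj u v ↔ ∃ t ∈ Set.Ico (0 : ℝ) 1,
    arcMem (l u) (r u) t ∧ arcMem (l v) (r v) t)

/-- `G` is a circular-arc graph. -/
def IsCircularArc (G : LoopGraph V) : Prop := ∃ l r : V → ℝ, G.IsCARep l r

/-- A normalized circular-arc representation of `G`. -/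
def IsNormalizedRep (G : LoopGraph V) (l r : V → ℝ) : Prop :=
  G.IsCARep l r ∧
  ∀ u v, G.Adj u v → u ≠ v →
    (arcProperContains (l u) (r u) (l v) (r v) ↔ G.nbhd v ⊆ G.nbhd u) ∧
    (arcsCover (l u) (r u) (l v) (r v) ↔ G.TwoOverlapEdge u v)

/-- A circular-arc representation of the induced subgraph `G[X]` which is
normalized with respect to `G`. -/
def IsNormalizedRepOn (G : LoopGraph V) (X : Set V) (l r : V → ℝ) : Prop :=
  (∀ v ∈ X, l v ∈ Set.Ico (0 : ℝ) 1) ∧ (∀ v ∈ X, r v ∈ Set.Ico (0 : ℝ) 1) ∧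
  Set.InjOn l X ∧ Set.InjOn r X ∧ (∀ u ∈ X, ∀ v ∈ X, l u ≠ r v) ∧
  (∀ u ∈ X, ∀ v ∈ X,
    (G.Adj u v ↔ ∃ t ∈ Set.Ico (0 : ℝ) 1,
      arcMem (l u) (r u) t ∧ arcMem (l v) (r v) t)) ∧
  (∀ u ∈ X, ∀ v ∈ X, G.Adj u v → u ≠ v →
    (arcProperContains (l u) (r u) (l v) (r v) ↔ G.nbhd v ⊆ G.nbhd u) ∧
    (arcsCover (l u) (r u) (l v) (r v) ↔ G.TwoOverlapEdge u v))

/-! Circular completions. -/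

/-- `f` exhibits `G` as an induced subgraph of `H`. -/
def InducedEmb (G : LoopGraph V) (H : LoopGraph W) (f : V → W) : Prop :=
  Function.Injective f ∧ ∀ u v, (G.Adj u v ↔ H.Adj (f u) (f v))

/-- Every edge of `G` has the same type (inclusion / 1-overlap / 2-overlap)
in `G` and in `H`. -/
def SameEdgeTypes (G : LoopGraph V) (H : LoopGraph W) (f : V → W) : Prop :=
  ∀ u v, G.Adj u v →
    ((G.InclusionEdge u v ↔ H.InclusionEdge (f u) (f v)) ∧
     (G.OneOverlapEdge u v ↔ H.OneOverlapEdge (f u) (f v)) ∧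
     (G.TwoOverlapEdge u v ↔ H.TwoOverlapEdge (f u) (f v)))

/-- `H` (with embedding `f`) is a circular completion of `G`: a circularly-paired
graph with the fewest possible vertices containing `G` as an induced subgraph with
all edge types preserved. -/
def IsCircularCompletion (G : LoopGraph V) (H : LoopGraph W) (f : V → W) : Prop :=
  Finite W ∧ G.InducedEmb H f ∧ G.SameEdgeTypes H f ∧ H.CircularlyPaired ∧
  ∀ (W' : Type) (H' : LoopGraph W') (f' : V → W'), Finite W' →
    G.InducedEmb H' f' → G.SameEdgeTypes H' f' → H'.CircularlyPaired →
    Nat.card W ≤ Nat.card W'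

/-! The anchored Δ-knotting graph. -/

/-- `A(z)`: vertices nonadjacent to `z` or overlapping `z`. -/
def Aset (G : LoopGraph V) (z : V) : Set V := {u | ¬ G.Adj z u ∨ G.Overlaps z u}

/-- `x` and `y` are `uz`-connected. -/
def UZConnected (G : LoopGraph V) (u z x y : V) : Prop :=
  ¬ G.InclusionEdge x u ∧ ¬ G.InclusionEdge y u ∧ ¬ G.InclusionEdge x z ∧
  ¬ G.InclusionEdge y z ∧ ¬ G.InclusionEdge u z ∧
  ∃ k, ∃ P : ℕ → V, G.IsWalk k P ∧ P 0 = x ∧ P k = y ∧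
    G.AvoidsWalk u k P ∧ G.AvoidsWalk z k P

/-- `X` is a `uz`-component: a maximal set of pairwise `uz`-connected vertices. -/
def IsUZComponent (G : LoopGraph V) (u z : V) (X : Set V) : Prop :=
  X.Nonempty ∧ (∀ x ∈ X, ∀ y ∈ X, G.UZConnected u z x y) ∧
  ∀ Y : Set V, X ⊆ Y → (∀ x ∈ Y, ∀ y ∈ Y, G.UZConnected u z x y) → Y = X

/-- Vertices of the `z`-anchored Δ-knotting graph: copies `(u, X)` of `u ∈ A(z)`,
one for each `uz`-component `X`. -/
def KnotVertex (G : LoopGraph V) (z : V) (p : V × Set V) : Prop :=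
  p.1 ∈ G.Aset z ∧ G.IsUZComponent p.1 z p.2

/-- Edges of the `z`-anchored Δ-knotting graph: for each edge `uv` of `G` with
`u, v ∈ A(z)`, an edge between the copy of `u` for `X` and the copy of `v` for `Y`
whenever `v ∈ X` and `u ∈ Y`. -/
def KnotAdj (G : LoopGraph V) (z : V) (p q : V × Set V) : Prop :=
  G.Adj p.1 q.1 ∧ p.1 ∈ G.Aset z ∧ q.1 ∈ G.Aset z ∧ q.1 ∈ p.2 ∧ p.1 ∈ q.2

/-- The `z`-anchored Δ-knotting graph of `G` is bipartite (it is 2-colourable). -/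
def KnotBipartite (G : LoopGraph V) (z : V) : Prop :=
  ∃ c : V × Set V → Bool, ∀ p q, G.KnotVertex z p → G.KnotVertex z q →
    G.KnotAdj z p q → c p ≠ c q

/-! Non-inverting sets. -/

/-- `X` is a non-inverting set of `G`. -/
def NonInvertingSet (G : LoopGraph V) (X : Set V) : Prop :=
  (∀ u ∈ X, ∀ v ∈ X, ¬ G.TwoOverlapEdge u v) ∧
  ¬ ∃ x ∈ X, ∃ y ∈ X, ∃ k, 0 < k ∧ ∃ P Q : ℕ → V,
      G.IsWalk k P ∧ G.IsWalk k Q ∧ (∀ i ≤ k, P i ∈ X) ∧ (∀ i ≤ k, Q i ∈ X) ∧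
      P 0 = x ∧ P k = y ∧ Q 0 = y ∧ Q k = x ∧ G.WalksAvoid k P Q

end LoopGraph

/-!
Edge-labelled graphs: graphs (with loops) in which every edge is labelled
inclusion or overlap, loops being labelled inclusion.
-/

structure ELGraph (V : Type) where
  Adj : V → V → Prop
  symm : ∀ u v, Adj u v → Adj v u
  refl : ∀ u, Adj u u
  /-- `Ovl u v` means the edge `uv` is labelled as an overlap edge. -/
  Ovl : V → V → Prop
  ovl_symm : ∀ u v, Ovl u v → Ovl v u
  ovl_adj : ∀ u v, Ovl u v → Adj u v
  ovl_irrefl : ∀ u, ¬ Ovl u u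

namespace ELGraph

variable {V : Type}

/-- Closed neighbourhood `N[u]`. -/
def nbhd (G : ELGraph V) (u : V) : Set V := {v | G.Adj u v}

/-- `uv` is (labelled as) an inclusion edge. -/
def InclEdge (G : ELGraph V) (u v : V) : Prop := G.Adj u v ∧ ¬ G.Ovl u v

/-- A walk with `k` edges. -/
def IsWalk (G : ELGraph V) (k : ℕ) (P : ℕ → V) : Prop :=
  ∀ i < k, G.Adj (P i) (P (i + 1))

/-- `z` avoids the edge `ab`: every neighbour of `z` among `a, b` overlaps `z`, and if
`z` overlaps both `a` and `b` then the edge `ab` is an inclusion edge. -/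
def AvoidsEdge (G : ELGraph V) (z a b : V) : Prop :=
  (G.Adj z a → G.Ovl z a) ∧ (G.Adj z b → G.Ovl z b) ∧
  (G.Ovl z a → G.Ovl z b → ¬ G.Ovl a b)

/-- The walks `P` and `Q` (both with `k` edges) avoid each other. -/
def WalksAvoid (G : ELGraph V) (k : ℕ) (P Q : ℕ → V) : Prop :=
  ∀ i < k, G.AvoidsEdge (P i) (Q i) (Q (i + 1)) ∧ G.AvoidsEdge (Q (i + 1)) (P i) (P (i + 1))

/-- The ordered pair `p` is related to the ordered pair `q`: there exist a walk from
`p.1` to `q.1` and a walk from `p.2` to `q.2`, of the same (positive) length, that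
avoid each other. -/
def Related (G : ELGraph V) (p q : V × V) : Prop :=
  ∃ k, 0 < k ∧ ∃ P Q : ℕ → V, G.IsWalk k P ∧ G.IsWalk k Q ∧
    P 0 = p.1 ∧ Q 0 = p.2 ∧ P k = q.1 ∧ Q k = q.2 ∧ G.WalksAvoid k P Q

/-- A Δ-implication class: a maximal set of pairwise related ordered pairs. -/
def IsDeltaClass (G : ELGraph V) (A : Set (V × V)) : Prop :=
  A.Nonempty ∧ (∀ p ∈ A, ∀ q ∈ A, G.Related p q) ∧
  ∀ B : Set (V × V), A ⊆ B → (∀ p ∈ B, ∀ q ∈ B, G.Related p q) → B = A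

/-- `A⁻¹ = {(u,v) : (v,u) ∈ A}`. -/
def inv (A : Set (V × V)) : Set (V × V) := {p | p.swap ∈ A}

/-- `span A`: the set of vertices incident to pairs of `A`. -/
def span (A : Set (V × V)) : Set V := {v | ∃ p ∈ A, v = p.1 ∨ v = p.2}

/-- `S` induces a clique. -/
def IsClique (G : ELGraph V) (S : Set V) : Prop := ∀ a ∈ S, ∀ b ∈ S, G.Adj a b

/-- A Δ-module. -/
def IsDeltaModule (G : ELGraph V) (S : Set V) : Prop :=
  S.Nonempty ∧
  (∀ x, x ∉ S →
    ((∀ s ∈ S, ¬ G.Adj x s) ∨ (∀ s ∈ S, G.InclEdge x s) ∨ (∀ s ∈ S, G.Ovl x s))) ∧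
  (¬ G.IsClique S → ∀ x, x ∉ S → ∀ s ∈ S, ¬ G.Ovl x s)

/-- A trivial Δ-module: the whole vertex set or a single vertex. -/
def TrivialModule (S : Set V) : Prop := S = Set.univ ∨ ∃ a : V, S = {a}

/-- `{a,b}` is a Δ-invertible pair: `(a,b)` is related to `(b,a)`. -/
def DeltaInvertiblePair (G : ELGraph V) (a b : V) : Prop := G.Related (a, b) (b, a)

/-- An interval ordering of an edge-labelled graph. -/
def IsIntervalOrdering (G : ELGraph V) (lt : V → V → Prop) : Prop :=
  IsStrictTotalOrder V lt ∧
  ¬ ∃ a b c, lt a b ∧ lt b c ∧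
    ((¬ G.Adj a b ∧ G.Adj a c) ∨
     (G.InclEdge a b ∧ ¬ G.Adj a c ∧ G.Adj b c) ∨
     (G.Ovl a b ∧ G.Adj a c ∧ ¬ G.Adj b c) ∨
     (G.Ovl a b ∧ G.Ovl b c ∧ G.InclEdge a c) ∨
     (G.InclEdge a b ∧ G.InclEdge b c ∧ G.Ovl a c))

/-- An interval representation of `G` consistent with its labelling. -/
def IsConsistentIntervalRep (G : ELGraph V) (l r : V → ℝ) : Prop :=
  (∀ v, l v ≤ r v) ∧
  (∀ u v, (G.Adj u v ↔ (Set.Icc (l u) (r u) ∩ Set.Icc (l v) (r v)).Nonempty)) ∧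
  (∀ u v, (G.Ovl u v ↔
    ((Set.Icc (l u) (r u) ∩ Set.Icc (l v) (r v)).Nonempty ∧
     ¬ Set.Icc (l u) (r u) ⊆ Set.Icc (l v) (r v) ∧
     ¬ Set.Icc (l v) (r v) ⊆ Set.Icc (l u) (r u))))

/-- A consistently edge-labelled graph: there is a transitive orientation `D` of its
inclusion edges (between distinct vertices) such that `D u v → N[v] ⊆ N[u]`. -/
def ConsistentlyLabelled (G : ELGraph V) : Prop :=
  ∃ D : V → V → Prop,
    (∀ u v, D u v → u ≠ v ∧ G.InclEdge u v) ∧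
    (∀ u v, u ≠ v → G.InclEdge u v → (D u v ↔ ¬ D v u)) ∧
    (∀ u v w, D u v → D v w → D u w) ∧
    (∀ u v, D u v → G.nbhd v ⊆ G.nbhd u)

end ELGraph

namespace ELGraph

variable {V : Type}

/-! ### Forcing between ordered pairs -/

/-- `Free G a b`: the pair `ab` is not an inclusion edge, i.e. it is a non-edge or an
overlap edge.  In particular `a ≠ b`. -/
def Free (G : ELGraph V) (a b : V) : Prop := G.Adj a b → G.Ovl a b

/-- The elementary forcing between ordered pairs: one coordinate stays fixed and avoids the
edge along which the other one moves. -/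
def Step (G : ELGraph V) (p q : V × V) : Prop :=
  (p.1 = q.1 ∧ G.Adj p.2 q.2 ∧ G.AvoidsEdge p.1 p.2 q.2) ∨
  (p.2 = q.2 ∧ G.Adj p.1 q.1 ∧ G.AvoidsEdge p.2 p.1 q.1)

/-- The equivalence relation on ordered pairs generated by elementary forcing
(`Step` is symmetric, so the reflexive-transitive closure suffices).  On free pairs
its classes are the Δ-implication classes. -/
def Forces (G : ELGraph V) : V × V → V × V → Prop := Relation.ReflTransGen G.Step

theorem Free.symm {G : ELGraph V} {a b : V} (h : G.Free a b) : G.Free b a :=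
  fun hb => G.ovl_symm _ _ (h (G.symm _ _ hb))

theorem Free.ne {G : ELGraph V} {a b : V} (h : G.Free a b) : a ≠ b := by
  rintro rfl
  exact G.ovl_irrefl _ (h (G.refl _))

theorem AvoidsEdge.symm {G : ELGraph V} {z a b : V} (h : G.AvoidsEdge z a b) :
    G.AvoidsEdge z b a :=
  ⟨h.2.1, h.1, fun h1 h2 h3 => h.2.2 h2 h1 (G.ovl_symm _ _ h3)⟩

theorem AvoidsEdge.loop {G : ELGraph V} {z a : V} (h : G.Free z a) : G.AvoidsEdge z a a :=
  ⟨h, h, fun _ _ => G.ovl_irrefl a⟩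

theorem Step.symm {G : ELGraph V} {p q : V × V} (h : G.Step p q) : G.Step q p := by
  obtain ⟨a, b⟩ := p
  obtain ⟨c, d⟩ := q
  rcases h with ⟨h1, h2, h3⟩ | ⟨h1, h2, h3⟩ <;> simp only at h1 h2 h3 <;> subst h1
  · exact Or.inl ⟨rfl, G.symm _ _ h2, h3.symm⟩
  · exact Or.inr ⟨rfl, G.symm _ _ h2, h3.symm⟩

theorem Forces.symm {G : ELGraph V} {p q : V × V} (h : G.Forces p q) : G.Forces q p :=
  haveI : Std.Symm G.Step := ⟨fun _ _ => Step.symm⟩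
  (Relation.ReflTransGen.stdSymm (r := G.Step)).symm _ _ h

theorem Forces.trans {G : ELGraph V} {p q s : V × V} (h : G.Forces p q) (h' : G.Forces q s) :
    G.Forces p s :=
  Relation.ReflTransGen.trans h h'

theorem Forces.swap {G : ELGraph V} {p q : V × V} (h : G.Forces p q) :
    G.Forces p.swap q.swap := by
  refine Relation.ReflTransGen.lift Prod.swap ?_ _ _ h
  rintro ⟨a, b⟩ ⟨c, d⟩ (h | h)
  · exact Or.inr h
  · exact Or.inl h

theorem Forces.flip {G : ELGraph V} {a b c d : V} (h : G.Forces (a, b) (c, d)) :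
    G.Forces (b, a) (d, c) := h.swap

theorem forces_right {G : ELGraph V} {a b b' : V} (h : G.Adj b b') (h' : G.AvoidsEdge a b b') :
    G.Forces (a, b) (a, b') :=
  Relation.ReflTransGen.single (Or.inl ⟨rfl, h, h'⟩)

theorem Step.free {G : ELGraph V} {p q : V × V} (h : G.Step p q) : G.Free q.1 q.2 := by
  obtain ⟨a, b⟩ := p
  obtain ⟨c, d⟩ := q
  rcases h with ⟨h1, h2, h3⟩ | ⟨h1, h2, h3⟩ <;> simp only at h1 h2 h3 <;> subst h1
  · exact h3.2.1
  · exact Free.symm h3.2.1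

/-- Appending one elementary step to a pair of avoiding walks. -/
theorem Related.step {G : ELGraph V} {p q s : V × V} (h : G.Related p q) (hs : G.Step q s) :
    G.Related p s := by
  obtain ⟨k, hk, P, Q, hP, hQ, hP0, hQ0, hPk, hQk, hav⟩ := h
  obtain ⟨a, b⟩ := q
  obtain ⟨c, d⟩ := s
  have key : G.Adj a c ∧ G.Adj b d ∧ G.AvoidsEdge a b d ∧ G.AvoidsEdge d a c := by
    have hf := hs.free
    have hf' := hs.symm.free
    rcases hs with ⟨h1, h2, h3⟩ | ⟨h1, h2, h3⟩ <;> simp only at h1 h2 h3 hf hf' <;> subst h1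
    · exact ⟨G.refl _, h2, h3, AvoidsEdge.loop hf.symm⟩
    · exact ⟨h2, G.refl _, AvoidsEdge.loop hf', h3⟩
  simp only at hPk hQk
  obtain ⟨k1, k2, k3, k4⟩ := key
  refine ⟨k + 1, by omega, fun i => if i ≤ k then P i else c, fun i => if i ≤ k then Q i else d,
    ?_, ?_, by simp [hP0], by simp [hQ0], by simp, by simp, ?_⟩
  · intro i hi
    rcases Nat.lt_or_ge i k with h | h
    · simpa [h.le, Nat.succ_le_of_lt h] using hP i h
    · obtain rfl : i = k := by omega
      simpa [hPk] using k1
  · intro i hi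
    rcases Nat.lt_or_ge i k with h | h
    · simpa [h.le, Nat.succ_le_of_lt h] using hQ i h
    · obtain rfl : i = k := by omega
      simpa [hQk] using k2
  · intro i hi
    rcases Nat.lt_or_ge i k with h | h
    · simpa [h.le, Nat.succ_le_of_lt h] using hav i h
    · obtain rfl : i = k := by omega
      simpa [hPk, hQk] using And.intro k3 k4

theorem Related.rfl_of_free {G : ELGraph V} {a b : V} (h : G.Free a b) :
    G.Related (a, b) (a, b) :=
  ⟨1, one_pos, fun _ => a, fun _ => b, fun _ _ => G.refl a, fun _ _ => G.refl b, rfl, rfl, rfl, rfl,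
    fun _ _ => ⟨AvoidsEdge.loop h, AvoidsEdge.loop h.symm⟩⟩

theorem Forces.related {G : ELGraph V} {p q : V × V} (h : G.Forces p q)
    (hp : G.Free p.1 p.2) : G.Related p q := by
  induction h with
  | refl => exact Related.rfl_of_free hp
  | tail _ hs ih => exact ih.step hs

/-! ### Rainbow triangles -/

/-- A triangle of free pairs in which no two sides sharing a vertex force each other.  A cyclic
triangle of an orientation that respects forcing is rainbow. -/
def Rainbow (G : ELGraph V) (a b c : V) : Prop :=
  G.Free a b ∧ G.Free b c ∧ G.Free c a ∧
  ¬ G.Forces (a, b) (a, c) ∧ ¬ G.Forces (b, c) (b, a) ∧ ¬ G.Forces (c, a) (c, b)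

theorem Rainbow.rotate {G : ELGraph V} {a b c : V} (h : G.Rainbow a b c) : G.Rainbow b c a :=
  ⟨h.2.1, h.2.2.1, h.1, h.2.2.2.2.1, h.2.2.2.2.2, h.2.2.2.1⟩

theorem Rainbow.reflect {G : ELGraph V} {a b c : V} (h : G.Rainbow a b c) : G.Rainbow a c b :=
  ⟨h.2.2.1.symm, h.2.1.symm, h.1.symm, fun x => h.2.2.2.1 x.symm, fun x => h.2.2.2.2.2 x.symm,
    fun x => h.2.2.2.2.1 x.symm⟩

/-- The sides of a rainbow triangle are all non-edges or all overlap edges: with mixed types one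
of the sides could move along an adjacent one. -/
theorem Rainbow.mono {G : ELGraph V} {a b c : V} (h : G.Rainbow a b c) :
    (¬ G.Adj a b ∧ ¬ G.Adj b c ∧ ¬ G.Adj c a) ∨ (G.Ovl a b ∧ G.Ovl b c ∧ G.Ovl c a) := by
  obtain ⟨h1, h2, h3, n1, n2, n3⟩ := h
  have f1 : G.Adj b c → ¬ G.AvoidsEdge a b c := fun x y => n1 (forces_right x y)
  have f2 : G.Adj c a → ¬ G.AvoidsEdge b c a := fun x y => n2 (forces_right x y)
  have f3 : G.Adj a b → ¬ G.AvoidsEdge c a b := fun x y => n3 (forces_right x y)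
  have s := G.symm
  have o := G.ovl_symm
  have oa := G.ovl_adj
  simp only [Free, AvoidsEdge] at *
  grind

theorem Rainbow.step {G : ELGraph V} {a b c c' : V} (h : G.Rainbow a b c) (hc : G.Adj c c')
    (hb : G.AvoidsEdge b c c') : G.Rainbow a b c' ∧ G.Forces (a, c) (a, c') := by
  have hm := h.mono
  have hbc := forces_right hc hb
  obtain ⟨h1, h2, h3, n1, n2, n3⟩ := h
  -- The following implications state that a side moving along an edge would identify two sides
  -- of the original triangle.
  have f1 : G.Adj c' a → ¬ G.AvoidsEdge b c' a := fun x y => n2 (hbc.trans (forces_right x y))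
  have f2 : G.AvoidsEdge a c c' → G.Adj b c' → ¬ G.AvoidsEdge a b c' :=
    fun x y z => n1 ((forces_right y z).trans (forces_right hc x).symm)
  have f3 : G.AvoidsEdge a c c' → G.Adj a b → ¬ G.AvoidsEdge c' a b :=
    fun x y z => n3 (((forces_right hc x).flip.trans (forces_right y z)).trans hbc.flip.symm)
  have s := G.symm
  have o := G.ovl_symm
  have oa := G.ovl_adj
  have hav : G.AvoidsEdge a c c' := by
    simp only [Free, AvoidsEdge] at *
    grind
  have hac := forces_right hc hav
  exact ⟨⟨h1, hb.2.1, Free.symm hav.2.1, fun x => n1 (x.trans hac.symm),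
    fun x => n2 (hbc.trans x), fun x => n3 ((hac.flip.trans x).trans hbc.flip.symm)⟩, hac⟩

/-- The triangle lemma: a side of a rainbow triangle may be replaced by any pair it forces, with
the apex and the classes of the other two sides kept. -/
theorem Rainbow.replace {G : ELGraph V} {a : V} {p q : V × V} (h : G.Rainbow a p.1 p.2)
    (hf : G.Forces p q) :
    G.Rainbow a q.1 q.2 ∧ G.Forces (a, p.1) (a, q.1) ∧ G.Forces (a, p.2) (a, q.2) := by
  induction hf with
  | refl => exact ⟨h, Relation.ReflTransGen.refl, Relation.ReflTransGen.refl⟩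
  | @tail q s _ hs ih =>
    obtain ⟨ih1, ih2, ih3⟩ := ih
    obtain ⟨b, c⟩ := q
    obtain ⟨d, e⟩ := s
    rcases hs with ⟨e1, e2, e3⟩ | ⟨e1, e2, e3⟩ <;> simp only at e1 e2 e3 ih1 ih2 ih3 ⊢ <;> subst e1
    · obtain ⟨r1, r2⟩ := ih1.step e2 e3
      exact ⟨r1, ih2, ih3.trans r2⟩
    · obtain ⟨r1, r2⟩ := ih1.reflect.step e2 e3
      exact ⟨r1.reflect, ih2.trans r2, ih3⟩

/-! ### Choosing an orientation -/

/-- The union of the forcing class of `p` and its inverse. -/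
def classPair (G : ELGraph V) (p : V × V) : Set (V × V) :=
  {q | G.Forces p q ∨ G.Forces p.swap q}

theorem classPair_nonempty (G : ELGraph V) (p : V × V) : (G.classPair p).Nonempty :=
  ⟨p, Or.inl Relation.ReflTransGen.refl⟩

theorem classPair_eq {G : ELGraph V} {p q : V × V} (h : G.Forces p q) :
    G.classPair p = G.classPair q := by
  ext s
  exact or_congr ⟨h.symm.trans, h.trans⟩ ⟨h.swap.symm.trans, h.swap.trans⟩

theorem classPair_swap (G : ELGraph V) (p : V × V) : G.classPair p.swap = G.classPair p := by
  ext s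
  simp only [classPair, Prod.swap_swap, Set.mem_ofPred_eq]
  exact or_comm

/-- The representative of the forcing class of `p` and its inverse: a pair whose first vertex is
the `f`-smallest vertex occurring in these classes. -/
noncomputable def rep (G : ELGraph V) (f : V → ℕ) (p : V × V) : V × V :=
  Function.argminOn (fun q => f q.1) (G.classPair p) (G.classPair_nonempty p)

theorem rep_mem (G : ELGraph V) (f : V → ℕ) (p : V × V) : G.rep f p ∈ G.classPair p :=
  Function.argminOn_mem _ _ _

theorem rep_le (G : ELGraph V) (f : V → ℕ) {p q : V × V} (h : q ∈ G.classPair p) :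
    f (G.rep f p).1 ≤ f q.1 :=
  Function.argminOn_le (fun q : V × V => f q.1) (G.classPair p) h

theorem rep_eq (G : ELGraph V) (f : V → ℕ) {p q : V × V} (h : G.Forces p q) :
    G.rep f p = G.rep f q := by
  unfold rep
  congr 1
  exact classPair_eq h

theorem rep_swap (G : ELGraph V) (f : V → ℕ) (p : V × V) : G.rep f p.swap = G.rep f p := by
  unfold rep
  congr 1
  exact G.classPair_swap p

/-- The orientation of the free pairs: of a forcing class and its inverse, the one that contains
the representative is chosen. -/
def Left (G : ELGraph V) (f : V → ℕ) (a b : V) : Prop :=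
  G.Free a b ∧ G.Forces (a, b) (G.rep f (a, b))

theorem Left.of_forces {G : ELGraph V} {f : V → ℕ} {a b c d : V} (h : G.Left f a b)
    (hcd : G.Free c d) (hf : G.Forces (a, b) (c, d)) : G.Left f c d :=
  ⟨hcd, by rw [← G.rep_eq f hf]; exact hf.symm.trans h.2⟩

theorem Left.or {G : ELGraph V} (f : V → ℕ) {a b : V} (h : G.Free a b) :
    G.Left f a b ∨ G.Left f b a := by
  rcases G.rep_mem f (a, b) with h' | h'
  · exact Or.inl ⟨h, h'⟩
  · refine Or.inr ⟨h.symm, ?_⟩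
    rw [show (b, a) = (a, b).swap from rfl, G.rep_swap]
    exact h'

theorem Left.asymm {G : ELGraph V} {f : V → ℕ} (hG : ¬ ∃ a b : V, G.DeltaInvertiblePair a b)
    {a b : V} (h : G.Left f a b) : ¬ G.Left f b a := by
  intro h'
  refine hG ⟨a, b, Forces.related (h.2.trans ?_) h.1⟩
  have := h'.2
  rw [show (b, a) = (a, b).swap from rfl, G.rep_swap] at this
  exact this.symm

/-- The key to acyclicity.  Let `x` be the smallest vertex of the class of `bc`.  By the triangle
lemma `(a, x)` is in the class of `ab`, so under `hmin` the representative of that class also starts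
at `x`.  A class of a rainbow triangle cannot contain pairs both into and out of `x`: a second
application of the triangle lemma then makes two sides force each other. -/
theorem Left.acyclic_aux {G : ELGraph V} {f : V → ℕ} (hf : Function.Injective f)
    {a b c : V} (hr : G.Rainbow a b c) (hab : G.Left f a b) (hbc : G.Left f b c)
    (hmin : f (G.rep f (b, c)).1 ≤ f (G.rep f (a, b)).1) : False := by
  have h1 := hbc.2
  have h2 := hab.2
  have hle := fun q => @rep_le _ G f (a, b) q
  generalize G.rep f (b, c) = q at *
  generalize G.rep f (a, b) = s at *
  obtain ⟨x, z⟩ := q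
  obtain ⟨x', y⟩ := s
  obtain ⟨r1, r2, r3⟩ := hr.replace (p := (b, c)) h1
  simp only at *
  have hx : f x' ≤ f x := hle (x, a) (Or.inr r2.swap)
  obtain rfl : x = x' := hf (le_antisymm hmin hx)
  obtain ⟨t1, t2, t3⟩ := r1.rotate.rotate.replace (p := (a, x)) (r2.symm.trans h2)
  simp only at *
  exact r1.2.2.2.2.2 t2

theorem Left.acyclic {G : ELGraph V} {f : V → ℕ} (hf : Function.Injective f)
    (hG : ¬ ∃ a b : V, G.DeltaInvertiblePair a b)
    {a b c : V} (hab : G.Left f a b) (hbc : G.Left f b c) (hca : G.Left f c a) : False := by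
  have hr : G.Rainbow a b c :=
    ⟨hab.1, hbc.1, hca.1, fun h => hca.asymm hG (hab.of_forces hca.1.symm h),
      fun h => hab.asymm hG (hbc.of_forces hab.1.symm h),
      fun h => hbc.asymm hG (hca.of_forces hbc.1.symm h)⟩
  rcases le_total (f (G.rep f (b, c)).1) (f (G.rep f (a, b)).1) with h1 | h1
  · exact acyclic_aux hf hr hab hbc h1
  rcases le_total (f (G.rep f (a, b)).1) (f (G.rep f (c, a)).1) with h2 | h2
  · exact acyclic_aux hf hr.rotate.rotate hca hab h2
  · exact acyclic_aux hf hr.rotate hbc hca (h2.trans h1)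

theorem exists_orientation [Fintype V] (G : ELGraph V)
    (hG : ¬ ∃ a b : V, G.DeltaInvertiblePair a b) :
    ∃ lt : V → V → Prop, (∀ a b, lt a b → G.Free a b) ∧
      (∀ a b, G.Free a b → lt a b ∨ lt b a) ∧ (∀ a b, lt a b → ¬ lt b a) ∧
      (∀ a b c, lt a b → lt b c → ¬ lt c a) ∧
      (∀ a b b', lt a b → G.Adj b b' → G.AvoidsEdge a b b' → lt a b') ∧
      (∀ a b b', lt b a → G.Adj b b' → G.AvoidsEdge a b b' → lt b' a) := by
  let f : V → ℕ := fun v => (Fintype.equivFin V v : ℕ)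
  have hf : Function.Injective f :=
    Fin.val_injective.comp (Fintype.equivFin V).injective
  refine ⟨G.Left f, fun a b h => h.1, fun a b => Left.or f, fun a b h => h.asymm hG,
    fun a b c h1 h2 h3 => Left.acyclic hf hG h1 h2 h3,
    fun a b b' h h1 h2 => h.of_forces h2.2.1 (forces_right h1 h2),
    fun a b b' h h1 h2 => h.of_forces (Free.symm h2.2.1) (forces_right h1 h2).flip⟩

/-! ### From an orientation to intervals -/

/-- A strict total order on a finite type is represented by natural numbers. -/
theorem exists_rank {α : Type} [Finite α] (T : α → α → Prop) (hirr : ∀ x, ¬ T x x)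
    (htr : ∀ x y z, T x y → T y z → T x z) (htot : ∀ x y, x ≠ y → T x y ∨ T y x) :
    ∃ ρ : α → ℝ, ∀ x y, ρ x < ρ y ↔ T x y := by
  have mono : ∀ x y, T x y → {z | T z x}.ncard < {z | T z y}.ncard := by
    intro x y h
    refine Set.ncard_lt_ncard ⟨fun z hz => htr _ _ _ hz h, fun hsub => hirr x (hsub h)⟩
      (Set.toFinite _)
  refine ⟨fun x => ({z | T z x}.ncard : ℝ), fun x y => ⟨fun h => ?_, fun h => ?_⟩⟩
  · by_contra hn
    have h' : {z | T z x}.ncard < {z | T z y}.ncard := by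
      simpa using h
    rcases eq_or_ne x y with rfl | hne
    · exact lt_irrefl _ h'
    · exact absurd (mono _ _ ((htot x y hne).resolve_left hn)) (by omega)
  · simpa using mono x y h

/-- The order of the endpoints (`inl` for left, `inr` for right) determined by the
orientation `lt` of the free pairs and the orientation `D` of the inclusion edges. -/
def endLt (G : ELGraph V) (lt D : V → V → Prop) : V ⊕ V → V ⊕ V → Prop
  | .inl u, .inl v => lt u v ∨ D u v
  | .inr u, .inr v => lt u v ∨ D v u
  | .inl u, .inr v => ¬ (¬ G.Adj v u ∧ lt v u)
  | .inr u, .inl v => ¬ G.Adj u v ∧ lt u v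

/-- Consistency of a representation as linear conditions on the endpoints. -/
theorem isConsistentIntervalRep_iff (G : ELGraph V) (l r : V → ℝ) :
    G.IsConsistentIntervalRep l r ↔ (∀ v, l v ≤ r v) ∧
      (∀ u v, G.Adj u v ↔ l u ≤ r v ∧ l v ≤ r u) ∧
      (∀ u v, G.Ovl u v ↔ (l u ≤ r v ∧ l v ≤ r u) ∧
        ((l u < l v ∧ r u < r v) ∨ (l v < l u ∧ r v < r u))) := by
  unfold IsConsistentIntervalRep
  refine and_congr_right fun hlr => ?_
  have e1 : ∀ u v, (Set.Icc (l u) (r u) ∩ Set.Icc (l v) (r v)).Nonempty ↔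
      l u ≤ r v ∧ l v ≤ r u := by
    intro u v
    rw [Set.Icc_inter_Icc, Set.nonempty_Icc, sup_le_iff, le_inf_iff, le_inf_iff]
    have := hlr u
    have := hlr v
    tauto
  have e2 : ∀ u v, Set.Icc (l u) (r u) ⊆ Set.Icc (l v) (r v) ↔ l v ≤ l u ∧ r u ≤ r v :=
    fun u v => Set.Icc_subset_Icc_iff (hlr u)
  simp only [e1, e2]
  refine and_congr_right fun _ => forall_congr' fun u => forall_congr' fun v =>
    iff_congr Iff.rfl (and_congr_right fun _ => ?_)
  grind

theorem exists_rep [Fintype V] (G : ELGraph V) (hcons : G.ConsistentlyLabelled)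
    (hG : ¬ ∃ a b : V, G.DeltaInvertiblePair a b) :
    ∃ l r : V → ℝ, G.IsConsistentIntervalRep l r := by
  obtain ⟨D, D1, D2, D3, D4⟩ := hcons
  obtain ⟨lt, t1, t2, t3, t4, t5, t6⟩ := G.exists_orientation hG
  have s := G.symm
  have o := G.ovl_symm
  have oa := G.ovl_adj
  have oi := G.ovl_irrefl
  have rf := G.refl
  have Dsub : ∀ u v w, D u v → G.Adj v w → G.Adj u w := fun u v w h h' => D4 u v h h'
  have Dfree : ∀ u v, D u v → G.Free u v → False := fun u v h h' => (D1 u v h).2.2 (h' (D1 u v h).2.1)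
  have Dadj : ∀ u v, D u v → G.Adj u v := fun u v h => (D1 u v h).2.1
  have Dirr : ∀ u, ¬ D u u := fun u h => (D1 u u h).1 rfl
  have Dasymm : ∀ u v, D u v → ¬ D v u := fun u v h h' => Dirr u (D3 _ _ _ h h')
  have tri : ∀ u v, u = v ∨ lt u v ∨ lt v u ∨ D u v ∨ D v u := by
    intro u v
    by_cases huv : u = v
    · exact Or.inl huv
    by_cases hf : G.Free u v
    · have := t2 u v hf
      tauto
    · have hi : G.InclEdge u v := by simpa [Free, InclEdge] using hf
      have := D2 u v huv hi
      tauto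
  have ltne : ∀ u v, lt u v → u ≠ v := fun u v h => (t1 u v h).ne
  have tD : ∀ u v, lt u v → ¬ D u v ∧ ¬ D v u := fun u v h =>
    ⟨fun h' => Dfree _ _ h' (t1 _ _ h), fun h' => Dfree _ _ h' (t1 _ _ h).symm⟩
  -- An endpoint of an oriented pair may move along an inclusion edge whenever the result is free.
  have m1 : ∀ a b b', lt a b → (D b b' ∨ D b' b) → G.Free a b' → lt a b' := by
    intro a b b' h h' hf
    have hadj : G.Adj b b' := h'.elim (Dadj _ _) fun x => s _ _ (Dadj _ _ x)
    have hno : ¬ G.Ovl b b' := h'.elim (fun x => (D1 _ _ x).2.2) fun x y => (D1 _ _ x).2.2 (o _ _ y)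
    exact t5 a b b' h hadj ⟨t1 _ _ h, hf, fun _ _ => hno⟩
  have m2 : ∀ a b b', lt b a → (D b b' ∨ D b' b) → G.Free a b' → lt b' a := by
    intro a b b' h h' hf
    have hadj : G.Adj b b' := h'.elim (Dadj _ _) fun x => s _ _ (Dadj _ _ x)
    have hno : ¬ G.Ovl b b' := h'.elim (fun x => (D1 _ _ x).2.2) fun x y => (D1 _ _ x).2.2 (o _ _ y)
    exact t6 a b b' h hadj ⟨(t1 _ _ h).symm, hf, fun _ _ => hno⟩
  have free_of_lt : ∀ u v, lt u v → G.Free u v ∧ G.Free v u := fun u v h =>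
    ⟨t1 _ _ h, (t1 _ _ h).symm⟩
  have Ltr : ∀ u v w, (lt u v ∨ D u v) → (lt v w ∨ D v w) → (lt u w ∨ D u w) := by
    intro u v w h1 h2
    have := tri u w
    grind
  have Rtr : ∀ u v w, (lt u v ∨ D v u) → (lt v w ∨ D w v) → (lt u w ∨ D w u) := by
    intro u v w h1 h2
    have := tri u w
    grind
  -- An endpoint of an oriented non-edge may move along any edge whenever the result is free.
  have n1 : ∀ a b b', lt a b → ¬ G.Adj a b → G.Adj b b' → G.Free a b' → lt a b' :=
    fun a b b' h h' h'' hf => t5 a b b' h h'' ⟨t1 _ _ h, hf, fun x => absurd (oa _ _ x) h'⟩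
  have n2 : ∀ a b b', lt b a → ¬ G.Adj b a → G.Adj b b' → G.Free a b' → lt b' a :=
    fun a b b' h h' h'' hf => t6 a b b' h h''
      ⟨(t1 _ _ h).symm, hf, fun x => absurd (s _ _ (oa _ _ x)) h'⟩
  have X : ∀ w u v, (¬ G.Adj w u ∧ lt w u) → (lt u v ∨ D u v) → (¬ G.Adj w v ∧ lt w v) := by
    intro w u v ⟨h1, h2⟩ h3
    have hwv : ¬ G.Adj w v := by
      intro hadj
      rcases h3 with h3 | h3
      · exact t3 _ _ h3 (n2 u w v h2 h1 hadj (t1 _ _ h3))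
      · exact h1 (s _ _ (Dsub _ _ _ h3 (s _ _ hadj)))
    refine ⟨hwv, ?_⟩
    have hf : G.Free w v := fun h => absurd h hwv
    rcases h3 with h3 | h3
    · exact (t2 _ _ hf).resolve_right (t4 _ _ _ h2 h3)
    · exact m1 _ _ _ h2 (Or.inl h3) hf
  have Y : ∀ w' w u, (lt w' w ∨ D w w') → (¬ G.Adj w u ∧ lt w u) → (¬ G.Adj w' u ∧ lt w' u) := by
    intro w' w u h3 ⟨h1, h2⟩
    have hwv : ¬ G.Adj w' u := by
      intro hadj
      rcases h3 with h3 | h3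
      · exact t3 _ _ h3
          (n1 w u w' h2 h1 (s _ _ hadj) (t1 _ _ h3).symm)
      · exact h1 (Dsub _ _ _ h3 hadj)
    refine ⟨hwv, ?_⟩
    have hf : G.Free w' u := fun h => absurd h hwv
    rcases h3 with h3 | h3
    · exact (t2 _ _ hf).resolve_right (fun h => t4 _ _ _ h3 h2 h)
    · exact m2 _ _ _ h2 (Or.inl h3) hf.symm
  obtain ⟨ρ, hρ⟩ := exists_rank (G.endLt lt D)
    (by rintro (u | u) <;> simp only [endLt] <;> grind)
    (by
      rintro (u | u) (v | v) (w | w) <;> simp only [endLt]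
      · exact Ltr u v w
      · exact fun h1 h2 h3 => h2 (X _ _ _ h3 h1)
      · intro h1 h2
        by_contra hn
        have := tri u w
        rcases eq_or_ne u w with rfl | hne
        · exact h1 h2
        · exact h1 (X v w u h2 (by tauto))
      · exact fun h1 h2 h3 => h1 (Y _ _ _ h2 h3)
      · exact X u v w
      · intro h1 h2
        by_contra hn
        have := tri u w
        rcases eq_or_ne u w with rfl | hne
        · exact h2 h1
        · exact h2 (Y w u v (by tauto) h1)
      · exact Y u v w
      · exact Rtr u v w)
    (by
      rintro (u | u) (v | v) <;> simp only [endLt, ne_eq, Sum.inl.injEq, Sum.inr.injEq,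
        not_false_eq_true, reduceCtorEq, forall_const] <;> have := tri u v <;> tauto)
  refine ⟨fun v => ρ (.inl v), fun v => ρ (.inr v), (G.isConsistentIntervalRep_iff _ _).2 ?_⟩
  simp only [← not_lt, hρ, endLt]
  have adj : ∀ u v, G.Adj u v ↔ ¬ (¬ G.Adj v u ∧ lt v u) ∧ ¬ (¬ G.Adj u v ∧ lt u v) := by
    intro u v
    constructor
    · exact fun h => ⟨fun h' => h'.1 (s _ _ h), fun h' => h'.1 h⟩
    · intro h
      by_contra hn
      have := t2 u v (fun h => absurd h hn)
      have : ¬ G.Adj v u := fun h => hn (s _ _ h)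
      tauto
  refine ⟨fun v h => h.1 (rf v), adj, fun u v => ?_⟩
  rw [← adj]
  constructor
  · intro h
    refine ⟨oa _ _ h, ?_⟩
    have := t2 u v (fun _ => h)
    tauto
  · rintro ⟨h1, h2⟩
    rcases h2 with ⟨hl | hl, hr⟩ | ⟨hl | hl, hr⟩
    · exact t1 _ _ hl h1
    · exact hr.elim (fun x => ((tD _ _ x).1 hl).elim) fun x => (Dasymm _ _ hl x).elim
    · exact o _ _ (t1 _ _ hl (s _ _ h1))
    · exact hr.elim (fun x => ((tD _ _ x).1 hl).elim) fun x => (Dasymm _ _ hl x).elim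

/-! ### A representation excludes invertible pairs -/

/-- In a representation, the side of `a` on which a vertex lies is preserved along edges that
`a` avoids, so the left-to-right order is constant along a pair of avoiding walks. -/
theorem not_invertible_of_rep {G : ELGraph V} {l r : V → ℝ} (h : G.IsConsistentIntervalRep l r)
    (a b : V) : ¬ G.DeltaInvertiblePair a b := by
  rw [isConsistentIntervalRep_iff] at h
  obtain ⟨hlr, hadj, hov⟩ := h
  have sep : ∀ a b, G.Free a b → (l a < l b ∧ r a < r b) ∨ (l b < l a ∧ r b < r a) := by
    intro a b hf
    have := hlr a
    have := hlr b
    simp only [Free, hadj, hov] at hf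
    grind
  have flip : ∀ a b, G.Free a b →
      ((l a < l b ∧ r a < r b) ↔ ¬ (l b < l a ∧ r b < r a)) := by
    intro a b hf
    have := sep a b hf
    exact ⟨fun h h' => lt_asymm h.1 h'.1, this.resolve_right⟩
  have move : ∀ a b b', G.Adj b b' → G.AvoidsEdge a b b' →
      ((l a < l b ∧ r a < r b) ↔ (l a < l b' ∧ r a < r b')) := by
    intro a b b' hb hav
    have h1 := sep a b hav.1
    have h2 := sep a b' hav.2.1
    have := hlr a
    have := hlr b
    have := hlr b'
    simp only [AvoidsEdge, hadj, hov] at hb hav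
    grind
  rintro ⟨k, hk, P, Q, hP, hQ, hP0, hQ0, hPk, hQk, hav⟩
  have hfree : ∀ i < k, G.Free (P i) (Q i) ∧ G.Free (P i) (Q (i + 1)) ∧
      G.Free (P (i + 1)) (Q (i + 1)) :=
    fun i hi => ⟨(hav i hi).1.1, (hav i hi).1.2.1, Free.symm (hav i hi).2.2.1⟩
  have inv : ∀ i ≤ k, ((l (P 0) < l (Q 0) ∧ r (P 0) < r (Q 0)) ↔
      (l (P i) < l (Q i) ∧ r (P i) < r (Q i))) := by
    intro i
    induction i with
    | zero => exact fun _ => Iff.rfl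
    | succ i ih =>
      intro hi
      rw [ih (by omega), move _ _ _ (hQ i hi) (hav i hi).1, flip _ _ (hfree i hi).2.1,
        move _ _ _ (hP i hi) (hav i hi).2, ← flip _ _ (hfree i hi).2.2]
  have h1 := inv k le_rfl
  have h2 := sep _ _ (hfree 0 hk).1
  rw [hPk, hQk] at h1
  rw [hP0, hQ0] at h1 h2
  simp only at h1 h2
  grind

end ELGraph

/-- A consistently edge-labelled graph has a consistent interval
representation iff it contains no Δ-invertible pair. -/
theorem consistentRep_iff_no_deltaInvertiblePair
    {V : Type} [Fintype V] (G : ELGraph V) (hcons : G.ConsistentlyLabelled) :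
    (∃ l r : V → ℝ, G.IsConsistentIntervalRep l r) ↔
      ¬ ∃ a b : V, G.DeltaInvertiblePair a b := by
  constructor
  · rintro ⟨l, r, h⟩ ⟨a, b, hab⟩
    exact ELGraph.not_invertible_of_rep h a b hab
  · exact G.exists_rep hcons
end

section
/- Let G be a circularly-paired finite graph (with a loop at every vertex) having no true twins. If G has a non-inverting set that contains exactly one vertex of every circular pair of G, then G is a circular-arc graph. -/
/-! ### Implication classes of nest graphs -/

/-- A reflexive symmetric adjacency relation together with a strict partial order `Sub`
("is nested inside") under which neighbourhoods are monotone.  Adjacent distinct vertices that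
are not nested are thought of as overlapping. -/
structure NestGraph (U : Type) where
  Adj : U → U → Prop
  Sub : U → U → Prop
  adj_refl : ∀ a, Adj a a
  adj_symm : ∀ a b, Adj a b → Adj b a
  sub_irrefl : ∀ a, ¬ Sub a a
  sub_trans : ∀ a b c, Sub a b → Sub b c → Sub a c
  sub_adj : ∀ a b c, Sub a b → Adj a c → Adj b c

namespace NestGraph

variable {U : Type} (S : NestGraph U)

/-- The overlap relation of a nest graph. -/
def Ov (a b : U) : Prop := S.Adj a b ∧ a ≠ b ∧ ¬ S.Sub a b ∧ ¬ S.Sub b a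

/-- Non-adjacent or overlapping: the pairs which lie side by side in an interval
representation, and so have to be oriented. -/
def Apart (a b : U) : Prop := ¬ S.Adj a b ∨ S.Ov a b

/-- The condition under which the orientation of `ab` forces the same orientation of `ac`:
an interval apart from both `b` and `c` has them on the same side when `b` and `c` intersect,
except possibly when all three pairwise overlap. -/
def Forces (a b c : U) : Prop :=
  S.Apart a b ∧ S.Apart a c ∧ S.Adj b c ∧ ¬ (S.Ov a b ∧ S.Ov a c ∧ S.Ov b c)

/-- Elementary forcing between ordered pairs: one coordinate moves, the other stays. -/
inductive Step : U × U → U × U → Prop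
  | right (a b b' : U) : S.Forces a b b' → Step (a, b) (a, b')
  | left (a a' b : U) : S.Forces b a a' → Step (a, b) (a', b)

/-- Membership in the same implication class. -/
abbrev Rel : U × U → U × U → Prop := Relation.ReflTransGen S.Step

variable {S}

lemma ov_symm {a b : U} (h : S.Ov a b) : S.Ov b a :=
  ⟨S.adj_symm _ _ h.1, h.2.1.symm, h.2.2.2, h.2.2.1⟩

lemma apart_symm {a b : U} (h : S.Apart a b) : S.Apart b a :=
  h.imp (fun h h' => h (S.adj_symm _ _ h')) ov_symm

lemma apart_ne {a b : U} (h : S.Apart a b) : a ≠ b := by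
  rintro rfl
  exact h.elim (fun h => h (S.adj_refl _)) (fun h => h.2.1 rfl)

lemma not_apart {a b : U} (h : ¬ S.Apart a b) : S.Adj a b ∧ (a = b ∨ S.Sub a b ∨ S.Sub b a) := by
  unfold Apart Ov at h
  tauto

lemma forces_symm {a b b' : U} (h : S.Forces a b b') : S.Forces a b' b :=
  ⟨h.2.1, h.1, S.adj_symm _ _ h.2.2.1, fun h' => h.2.2.2 ⟨h'.2.1, h'.1, ov_symm h'.2.2⟩⟩

lemma step_symm {p q : U × U} (h : S.Step p q) : S.Step q p := by
  cases h with
  | right a b b' h => exact .right _ _ _ (forces_symm h)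
  | left a a' b h => exact .left _ _ _ (forces_symm h)

lemma rel_symm {p q : U × U} (h : S.Rel p q) : S.Rel q p := by
  induction h with
  | refl => exact .refl
  | tail _ h ih => exact .head (step_symm h) ih

lemma step_swap {p q : U × U} (h : S.Step p q) : S.Step p.swap q.swap := by
  cases h with
  | right a b b' h => exact .left _ _ _ h
  | left a a' b h => exact .right _ _ _ h

lemma rel_swap {p q : U × U} (h : S.Rel p q) : S.Rel p.swap q.swap := by
  induction h with
  | refl => exact .refl
  | tail _ h ih => exact .tail ih (step_swap h)

lemma rel_apart {p q : U × U} (h : S.Rel p q) (hp : S.Apart p.1 p.2) : S.Apart q.1 q.2 := by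
  induction h with
  | refl => exact hp
  | tail _ h _ =>
    cases h with
    | right a b b' h => exact h.2.1
    | left a a' b h => exact apart_symm h.2.1

variable (S) in
/-- `D` picks exactly one direction of every apart pair, respecting elementary forcing. -/
structure Orients (D : U → U → Prop) : Prop where
  apart : ∀ a b, D a b → S.Apart a b
  asymm : ∀ a b, D a b → ¬ D b a
  total : ∀ a b, S.Apart a b → D a b ∨ D b a
  right : ∀ a b b', D a b → S.Forces a b b' → D a b'
  left : ∀ a a' b, D a b → S.Forces b a a' → D a' b

/-! ### The triangle lemma -/

/-- Reversing an orientation reflects the line, so it is again an orientation. -/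
lemma Orients.flip {D : U → U → Prop} (hD : S.Orients D) : S.Orients (fun a b => D b a) where
  apart _ _ h := apart_symm (hD.apart _ _ h)
  asymm _ _ h := hD.asymm _ _ h
  total a b h := (hD.total a b h).symm
  right _ _ _ h hf := hD.left _ _ _ h hf
  left _ _ _ h hf := hD.right _ _ _ h hf

lemma Orients.rel {D : U → U → Prop} (hD : S.Orients D) {p q : U × U} (h : S.Rel p q)
    (hp : D p.1 p.2) : D q.1 q.2 := by
  induction h with
  | refl => exact hp
  | tail _ h ih =>
    cases h with
    | right a b b' h => exact hD.right _ _ _ ih h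
    | left a a' b h => exact hD.left _ _ _ ih h

/-- `abc` is a directed triangle of `D`. -/
def Cyc (D : U → U → Prop) (a b c : U) : Prop := D a b ∧ D b c ∧ D c a

lemma Cyc.rot {D : U → U → Prop} {a b c : U} (h : Cyc D a b c) : Cyc D b c a :=
  ⟨h.2.1, h.2.2, h.1⟩

/-- All arcs of a directed triangle have the same type: rotating gives all three non-adjacent or
all three overlapping. -/
lemma Cyc.not_adj {D : U → U → Prop} (hD : S.Orients D) {a b c : U} (h : Cyc D a b c)
    (hab : ¬ S.Adj a b) : ¬ S.Adj b c := fun hbc =>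
  hD.asymm _ _ h.2.2 (hD.right _ _ _ h.1
    ⟨.inl hab, apart_symm (hD.apart _ _ h.2.2), hbc, fun h' => hab h'.1.1⟩)

/-- One elementary step of the triangle lemma: if the forcing at `b` moves `c` to `c'`, then the
forcing at the opposite vertex `a` also moves `c` to `c'`. -/
lemma Cyc.forces {D : U → U → Prop} (hD : S.Orients D) {a b c c' : U} (h : Cyc D a b c)
    (hf : S.Forces b c c') : S.Forces a c c' := by
  have hbc' : D b c' := hD.right _ _ _ h.2.1 hf
  have hba : S.Apart b a := apart_symm (hD.apart _ _ h.1)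
  -- Otherwise `b → c'` would force `b → a`.
  have key : S.Adj c' a → S.Ov b c' ∧ S.Ov b a ∧ S.Ov c' a := fun hadj => by
    by_contra hno
    exact hD.asymm _ _ h.1 (hD.right _ _ _ hbc' ⟨hf.2.1, hba, hadj, hno⟩)
  refine ⟨apart_symm (hD.apart _ _ h.2.2), ?_, hf.2.2.1, ?_⟩
  · by_cases hadj : S.Adj c' a
    · exact .inr (ov_symm (key hadj).2.2)
    · exact .inl fun h' => hadj (S.adj_symm _ _ h')
  · rintro ⟨hac, hac', hcc'⟩
    have hbc : S.Ov b c := by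
      refine (hD.apart _ _ h.2.1).resolve_left fun hn => ?_
      exact h.rot.not_adj hD hn (S.adj_symm _ _ hac.1)
    exact hf.2.2.2 ⟨hbc, (key (S.adj_symm _ _ hac'.1)).1, hcc'⟩

/-- Triangle lemma: a directed triangle persists, with the same apex, when its opposite arc is
replaced by any other arc of the same implication class, and the two remaining arcs stay in
their classes. -/
lemma Cyc.triangle {D : U → U → Prop} (hD : S.Orients D) {a b c : U} (h : Cyc D a b c)
    {q : U × U} (hq : S.Rel (b, c) q) :
    Cyc D a q.1 q.2 ∧ S.Rel (a, b) (a, q.1) ∧ S.Rel (a, c) (a, q.2) := by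
  induction hq with
  | refl => exact ⟨h, .refl, .refl⟩
  | tail _ hs ih =>
    obtain ⟨ih, h1, h2⟩ := ih
    cases hs with
    | right b c c' hf =>
      have hf' := ih.forces hD hf
      exact ⟨⟨ih.1, hD.right _ _ _ ih.2.1 hf, hD.left _ _ _ ih.2.2 hf'⟩, h1,
        h2.tail (.right _ _ _ hf')⟩
    | left b b' c hf =>
      have hf' := Cyc.forces hD.flip (a := a) (b := c) (c := b) ⟨ih.2.2, ih.2.1, ih.1⟩ hf
      exact ⟨⟨hD.right _ _ _ ih.1 hf', hD.left _ _ _ ih.2.1 hf, ih.2.2⟩,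
        h1.tail (.right _ _ _ hf'), h2⟩

/-! ### Lexicographic orientation -/

section Lex

variable [LinearOrder U]

variable (S) in
/-- `q` is the lexicographically least pair in the implication class of `p` or its reverse, and
it lies in the class of `p` itself. -/
def IsPick (p q : U × U) : Prop :=
  S.Rel p q ∧ ∀ r, S.Rel p r ∨ S.Rel p.swap r → toLex q ≤ toLex r

variable (S) in
/-- The lexicographic orientation: in each implication class together with its reverse, the
lexicographically least pair is oriented forwards. -/
def LexOrient (a b : U) : Prop := S.Apart a b ∧ ∃ q, S.IsPick (a, b) q

lemma IsPick.of_rel {p p' q : U × U} (hp : S.Rel p p') (h : S.IsPick p q) : S.IsPick p' q :=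
  ⟨(rel_symm hp).trans h.1, fun r hr => h.2 r (hr.imp hp.trans (rel_swap hp).trans)⟩

lemma lexOrient_orients [Finite U] (hinv : ∀ a b, S.Apart a b → ¬ S.Rel (a, b) (b, a)) :
    S.Orients S.LexOrient where
  apart a b h := h.1
  asymm := by
    rintro a b ⟨hab, q, hq⟩ ⟨-, q', hq'⟩
    have h1 := hq.2 q' (.inr hq'.1)
    have h2 := hq'.2 q (.inr hq.1)
    have he : q = q' := toLex.injective (le_antisymm h1 h2)
    subst he
    exact hinv a b hab (hq.1.trans (rel_symm hq'.1))
  total a b h := by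
    obtain ⟨m, hm, hmin⟩ := Set.exists_min_image
      {r | S.Rel (a, b) r ∨ S.Rel (b, a) r} toLex (Set.toFinite _) ⟨(a, b), .inl .refl⟩
    rcases hm with hm | hm
    · exact .inl ⟨h, m, hm, fun r hr => hmin r hr⟩
    · exact .inr ⟨apart_symm h, m, hm, fun r hr => hmin r hr.symm⟩
  right a b b' h hf := by
    obtain ⟨-, q, hq⟩ := h
    exact ⟨hf.2.1, q, hq.of_rel (.single (.right _ _ _ hf))⟩
  left a a' b h hf := by
    obtain ⟨-, q, hq⟩ := h
    exact ⟨apart_symm hf.2.1, q, hq.of_rel (.single (.left _ _ _ hf))⟩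

/-- A directed triangle in which the pick of `bc` is at most that of `ab` is impossible.
Moving `bc` to its pick `(i, j)` makes `a` a triangle over `(i, j)`, so the class of `ab`
contains a pair at `i`; its pick then starts at `i` too, which by the triangle lemma for the apex
`j` reverses the arc `(i, j)`. -/
lemma Cyc.false_of_le {D : U → U → Prop} (hD : S.Orients D) {a b c : U} (h : Cyc D a b c)
    {p q : U × U} (hp : S.IsPick (a, b) p) (hq : S.IsPick (b, c) q) (hle : toLex q ≤ toLex p) :
    False := by
  obtain ⟨i, j⟩ := q
  obtain ⟨s, t⟩ := p
  obtain ⟨hc, h1, -⟩ := h.triangle hD hq.1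
  have hle' := hp.2 (i, a) (.inr (rel_swap h1))
  have his : i = s := by
    rw [Prod.Lex.toLex_le_toLex] at hle hle'
    simp only at hle hle'
    apply le_antisymm
    · rcases hle with h | h
      exacts [h.le, h.1.le]
    · rcases hle' with h | h
      exacts [h.le, h.1.le]
  subst his
  have h2 := hc.rot.rot.triangle hD ((rel_symm h1).trans hp.1)
  exact hD.asymm _ _ hc.2.1 h2.1.1

lemma lexOrient_not_cyc (hD : S.Orients S.LexOrient) {a b c : U}
    (h : Cyc S.LexOrient a b c) : False := by
  obtain ⟨p, hp⟩ := h.1.2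
  obtain ⟨q, hq⟩ := h.2.1.2
  obtain ⟨r, hr⟩ := h.2.2.2
  by_cases h1 : toLex q ≤ toLex p
  · exact h.false_of_le hD hp hq h1
  by_cases h2 : toLex r ≤ toLex q
  · exact h.rot.false_of_le hD hq hr h2
  exact h.rot.rot.false_of_le hD hr hp ((not_le.1 h1).le.trans (not_le.1 h2).le)

end Lex

/-! ### Interval representations of nest graphs -/

lemma Orients.trans {D : U → U → Prop} (hD : S.Orients D)
    (hcyc : ∀ a b c, ¬ Cyc D a b c) {a b c : U} (hab : D a b) (hbc : D b c) : D a c := by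
  by_cases h : S.Apart a c
  · exact (hD.total a c h).resolve_right fun h' => hcyc _ _ _ ⟨hab, hbc, h'⟩
  · obtain ⟨hadj, he⟩ := not_apart h
    -- With `a` and `c` equal or nested, `a → b` would force `c → b`.
    exact absurd (hD.left _ c _ hab ⟨apart_symm (hD.apart _ _ hab), hD.apart _ _ hbc, hadj,
      fun h' => h (.inr h'.2.2)⟩) (hD.asymm _ _ hbc)

/-- The order of the interval endpoints (`inl` left, `inr` right) read off from an orientation. -/
def EndLt (S : NestGraph U) (D : U → U → Prop) : U ⊕ U → U ⊕ U → Prop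
  | .inl a, .inl b => D a b ∨ S.Sub b a
  | .inr a, .inr b => D a b ∨ S.Sub a b
  | .inl a, .inr b => S.Adj a b ∨ D a b
  | .inr a, .inl b => ¬ S.Adj a b ∧ D a b

/-- An acyclic orientation that respects forcing makes the endpoint order transitive; only
triples of vertices are involved. -/
lemma Orients.endLt_trans {D : U → U → Prop} (hD : S.Orients D)
    (hcyc : ∀ a b c, ¬ Cyc D a b c) {x y z : U ⊕ U} (hxy : S.EndLt D x y)
    (hyz : S.EndLt D y z) : S.EndLt D x z := by
  have tr : ∀ a b c, D a b → D b c → D a c := fun a b c => hD.trans hcyc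
  have cmp : ∀ a b, a = b ∨ D a b ∨ D b a ∨ S.Sub a b ∨ S.Sub b a := fun a b => by
    by_cases h : S.Apart a b
    · have := hD.total a b h
      tauto
    · have := not_apart h
      tauto
  have as := hD.asymm
  have st := S.sub_trans
  have sadj := S.sub_adj
  have symm := S.adj_symm
  have refl := S.adj_refl
  have sa : ∀ a b, S.Sub a b → S.Adj a b := fun a b h =>
    S.adj_symm _ _ (S.sub_adj _ _ _ h (S.adj_refl a))
  have na : ∀ a b, ¬ S.Adj a b → D a b ∨ D b a := fun a b h => hD.total a b (.inl h)
  have ds : ∀ a b, D a b → ¬ S.Sub a b ∧ ¬ S.Sub b a := fun a b h => by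
    rcases hD.apart _ _ h with h' | h'
    · exact ⟨fun h => h' (sa _ _ h), fun h => h' (symm _ _ (sa _ _ h))⟩
    · exact h'.2.2
  -- Nested intervals lie on the same side of anything apart from both.
  have cl : ∀ a b c, D a b → S.Sub a c ∨ S.Sub c a → ¬ D b c := fun a b c h hs h' => by
    have hb := tr _ _ _ h h'
    have := ds _ _ hb
    tauto
  -- A non-adjacent pair stays non-adjacent when stretched.
  have n1 : ∀ a b c, D a b → D b c → ¬ S.Adj a b → ¬ S.Adj a c := fun a b c h h' hn hac =>
    as _ _ h' (hD.left a c b h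
      ⟨apart_symm (hD.apart _ _ h), hD.apart _ _ h', hac, fun hh => hn (symm _ _ hh.1.1)⟩)
  have n2 : ∀ a b c, D a b → D b c → ¬ S.Adj b c → ¬ S.Adj a c := fun a b c h h' hn hac =>
    as _ _ h' (hD.left a c b h
        ⟨apart_symm (hD.apart _ _ h), hD.apart _ _ h', hac, fun hh => hn hh.2.1.1⟩)
  rcases x with a | a <;> rcases y with b | b <;> rcases z with c | c <;>
    simp only [EndLt] at hxy hyz ⊢ <;>
    grind

/-- Without inverted pairs there is an interval representation by natural numbers with distinct
endpoints whose intersections are the edges and whose nestings are `Sub`. -/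
theorem exists_interval_rep [Finite U] (hinv : ∀ a b, S.Apart a b → ¬ S.Rel (a, b) (b, a)) :
    ∃ ρ : U ⊕ U → ℕ, Function.Injective ρ ∧ (∀ a, ρ (.inl a) < ρ (.inr a)) ∧
      (∀ a b, S.Adj a b ↔ ρ (.inl a) < ρ (.inr b) ∧ ρ (.inl b) < ρ (.inr a)) ∧
      (∀ a b, (a = b ∨ S.Sub a b) ↔ ρ (.inl b) ≤ ρ (.inl a) ∧ ρ (.inr a) ≤ ρ (.inr b)) := by
  obtain ⟨n, ⟨e⟩⟩ := Finite.exists_equiv_fin U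
  let _ : LinearOrder U := LinearOrder.lift' e e.injective
  have hD := lexOrient_orients hinv
  have hcyc : ∀ a b c, ¬ Cyc S.LexOrient a b c := fun a b c => lexOrient_not_cyc hD
  generalize S.LexOrient = D at hD hcyc
  have irr : ∀ x, ¬ S.EndLt D x x := by
    have h1 : ∀ a, ¬ D a a := fun a h => hD.asymm _ _ h h
    have h2 := S.sub_irrefl
    rintro (a | a) <;> simp [EndLt, h1, h2]
  have cmp : ∀ a b, a = b ∨ D a b ∨ D b a ∨ S.Sub a b ∨ S.Sub b a := fun a b => by
    by_cases h : S.Apart a b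
    · have := hD.total a b h
      tauto
    · have := not_apart h
      tauto
  have nadj : ∀ a b, ¬ S.Adj a b → D a b ∨ D b a := fun a b h => hD.total a b (.inl h)
  have symm := S.adj_symm
  have tot : ∀ x y, x = y ∨ S.EndLt D x y ∨ S.EndLt D y x := by
    rintro (a | a) (b | b) <;> simp only [EndLt, Sum.inl.injEq, Sum.inr.injEq] <;>
      grind
  -- The position of an endpoint is the number of endpoints before it.
  let ρ : U ⊕ U → ℕ := fun x => {y | S.EndLt D y x}.ncard
  have mono : ∀ x y, S.EndLt D x y → ρ x < ρ y := fun x y h =>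
    Set.ncard_lt_ncard ⟨fun z hz => hD.endLt_trans hcyc hz h, fun hs => irr x (hs h)⟩
      (Set.toFinite _)
  have hadj : ∀ a b, S.Adj a b → ρ (.inl a) < ρ (.inr b) := fun a b h => mono _ _ (.inl h)
  have hsub : ∀ a b, S.Sub a b → ρ (.inl b) < ρ (.inl a) ∧ ρ (.inr a) < ρ (.inr b) :=
    fun a b h => ⟨mono _ _ (.inr h), mono _ _ (.inr h)⟩
  have hDlt : ∀ a b, D a b → ρ (.inl a) < ρ (.inl b) ∧ ρ (.inr a) < ρ (.inr b) :=
    fun a b h => ⟨mono _ _ (.inl h), mono _ _ (.inl h)⟩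
  refine ⟨ρ, fun x y h => ?_, fun a => hadj _ _ (S.adj_refl a), fun a b => ⟨fun h =>
    ⟨hadj _ _ h, hadj _ _ (symm _ _ h)⟩, fun h => ?_⟩, fun a b => ⟨?_, fun h => ?_⟩⟩
  · rcases tot x y with h' | h' | h'
    · exact h'
    · exact absurd h (mono _ _ h').ne
    · exact absurd h (mono _ _ h').ne'
  · by_contra hn
    rcases nadj a b hn with h' | h'
    · exact absurd (mono (.inr a) (.inl b) ⟨hn, h'⟩) h.2.not_gt
    · exact absurd (mono (.inr b) (.inl a) ⟨fun hh => hn (symm _ _ hh), h'⟩) h.1.not_gt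
  · rintro (rfl | h)
    · exact ⟨le_rfl, le_rfl⟩
    · exact ⟨(hsub _ _ h).1.le, (hsub _ _ h).2.le⟩
  · rcases cmp a b with h' | h' | h' | h' | h'
    · exact .inl h'
    · exact absurd (hDlt _ _ h').1 h.1.not_gt
    · exact absurd (hDlt _ _ h').2 h.2.not_gt
    · exact .inr h'
    · exact absurd (hsub _ _ h').1 h.1.not_gt

end NestGraph

/-! ### Circular pairs -/

namespace LoopGraph

variable {V : Type} {G : LoopGraph V}

lemma CircularPair.symm {u v : V} (h : G.CircularPair u v) : G.CircularPair v u :=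
  ⟨⟨h.1.2, h.1.1⟩, fun hvu => h.2 (G.symm _ _ hvu)⟩

/-- The partner of `u` sees exactly the vertices whose neighbourhood is not inside `N[u]`, just as
the complementary arc meets exactly the arcs not contained in the given one. -/
lemma CircularPair.adj_iff {u v : V} (h : G.CircularPair u v) (x : V) :
    G.Adj x v ↔ ¬ G.nbhd x ⊆ G.nbhd u := by
  constructor
  · exact fun hx hs => h.2 (hs hx)
  · intro hs
    by_contra hx
    exact hs (h.1.1 x fun h' => hx (G.symm _ _ h'))

lemma CircularPair.unique (ht : ∀ u v, ¬ G.TrueTwins u v) {u v w : V}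
    (hv : G.CircularPair u v) (hw : G.CircularPair u w) : v = w := by
  by_contra hne
  exact ht v w ⟨hne, (hw.1.2 v hv.2).antisymm (hv.1.2 w hw.2)⟩

/-- Partners of vertices of `X` are adjacent: otherwise the vertices themselves would form a
circular pair or a 2-overlap edge inside `X`. -/
lemma adj_partners {X : Set V} (hX : ∀ u ∈ X, ∀ v ∈ X, ¬ G.TwoOverlapEdge u v)
    (hexact : ∀ u v, G.CircularPair u v → ((u ∈ X ∧ v ∉ X) ∨ (u ∉ X ∧ v ∈ X)))
    {u v u' v' : V} (hu : u ∈ X) (hv : v ∈ X) (huu : G.CircularPair u u')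
    (hvv : G.CircularPair v v') : G.Adj u' v' := by
  by_contra hn
  have hn' : ¬ G.Adj v' u' := fun h => hn (G.symm _ _ h)
  have hspan : G.SpanningPair u v := by
    constructor
    · intro x hx
      by_contra hs
      exact hn' (hvv.1.2 x hx ((huu.adj_iff x).2 hs))
    · intro x hx
      by_contra hs
      exact hn (huu.1.2 x hx ((hvv.adj_iff x).2 hs))
  by_cases hadj : G.Adj u v
  · refine hX u hu v hv ⟨⟨hadj, fun hs => ?_, fun hs => ?_⟩, hspan⟩
    · have h1 : ¬ G.Adj u v' := fun h => (hvv.adj_iff u).1 h hs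
      exact hn (huu.1.2 v' h1 (G.refl v'))
    · have h1 : ¬ G.Adj v u' := fun h => (huu.adj_iff v).1 h hs
      exact hn' (hvv.1.2 u' h1 (G.refl u'))
  · have := hexact u v ⟨hspan, hadj⟩
    tauto

/-! ### The nest graph of `X` -/

/-- The vertices of `X` with the adjacency of `G`, nested according to neighbourhoods in all
of `G`. -/
def toNest (G : LoopGraph V) (ht : ∀ u v, ¬ G.TrueTwins u v) (X : Set V) : NestGraph X where
  Adj a b := G.Adj a b
  Sub a b := a ≠ b ∧ G.nbhd a ⊆ G.nbhd b
  adj_refl a := G.refl a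
  adj_symm a b h := G.symm _ _ h
  sub_irrefl a h := h.1 rfl
  sub_trans a b c h h' := by
    refine ⟨?_, h.2.trans h'.2⟩
    rintro rfl
    exact ht a b ⟨fun he => h.1 (Subtype.ext he), h.2.antisymm h'.2⟩
  sub_adj a b c h hc := h.2 hc

lemma toNest_ov_iff (ht : ∀ u v, ¬ G.TrueTwins u v) (X : Set V) (a b : X) :
    (G.toNest ht X).Ov a b ↔ G.Overlaps a b := by
  constructor
  · exact fun h => ⟨h.1, fun hs => h.2.2.1 ⟨h.2.1, hs⟩, fun hs => h.2.2.2 ⟨h.2.1.symm, hs⟩⟩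
  · refine fun h => ⟨h.1, ?_, fun hs => h.2.1 hs.2, fun hs => h.2.2 hs.2⟩
    rintro rfl
    exact h.2.1 subset_rfl

lemma avoidsEdge_of_forces (ht : ∀ u v, ¬ G.TrueTwins u v) (X : Set V) {a b b' : X}
    (h : (G.toNest ht X).Forces a b b') : G.AvoidsEdge a b b' := by
  obtain ⟨h1, h2, -, h4⟩ := h
  simp only [NestGraph.Apart, toNest_ov_iff] at h1 h2 h4
  change ¬ G.Adj a b ∨ _ at h1
  change ¬ G.Adj a b' ∨ _ at h2
  unfold AvoidsEdge
  tauto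

lemma avoidsEdge_loop (ht : ∀ u v, ¬ G.TrueTwins u v) (X : Set V) {a b : X}
    (h : (G.toNest ht X).Apart a b) : G.AvoidsEdge a b b := by
  simp only [NestGraph.Apart, toNest_ov_iff] at h
  change ¬ G.Adj a b ∨ _ at h
  exact ⟨h.neg_resolve_left, h.neg_resolve_left, fun _ _ h' => h'.2.1 subset_rfl⟩

/-- An elementary forcing step is a pair of walks of length one avoiding each other. -/
lemma step_avoids (ht : ∀ u v, ¬ G.TrueTwins u v) (X : Set V) {p q : X × X}
    (h : (G.toNest ht X).Step p q) : G.Adj p.1 q.1 ∧ G.Adj p.2 q.2 ∧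
      G.AvoidsEdge p.1 p.2 q.2 ∧ G.AvoidsEdge q.2 p.1 q.1 := by
  cases h with
  | right a b b' h =>
    exact ⟨G.refl _, h.2.2.1, avoidsEdge_of_forces ht X h,
      avoidsEdge_loop ht X (NestGraph.apart_symm h.2.1)⟩
  | left a a' b h =>
    exact ⟨h.2.2.1, G.refl _, avoidsEdge_loop ht X (NestGraph.apart_symm h.1),
      avoidsEdge_of_forces ht X h⟩

/-- A reflexive-transitive chain as an explicit sequence, the form in which walks are given. -/
lemma exists_chain {α : Type} {r : α → α → Prop} {x y : α} (h : Relation.ReflTransGen r x y) :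
    ∃ k, ∃ f : ℕ → α, f 0 = x ∧ f k = y ∧ ∀ i < k, r (f i) (f (i + 1)) := by
  induction h using Relation.ReflTransGen.head_induction_on with
  | refl => exact ⟨0, fun _ => y, rfl, rfl, by simp⟩
  | @head a c hac _ ih =>
    obtain ⟨k, f, h0, hk, hf⟩ := ih
    refine ⟨k + 1, fun i => i.casesOn a f, rfl, hk, ?_⟩
    rintro (_ | i) hi
    · change r a (f 0)
      rwa [h0]
    · exact hf i (by omega)

lemma toNest_not_rel (ht : ∀ u v, ¬ G.TrueTwins u v) (X : Set V) (hX : G.NonInvertingSet X)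
    (a b : X) (hab : (G.toNest ht X).Apart a b) : ¬ (G.toNest ht X).Rel (a, b) (b, a) := by
  intro h
  obtain ⟨k, f, h0, hk, hf⟩ := exists_chain h
  have hs := fun i hi => step_avoids ht X (hf i hi)
  refine hX.2 ⟨a, a.2, b, b.2, k, ?_, fun i => (f i).1, fun i => (f i).2,
    fun i hi => (hs i hi).1, fun i hi => (hs i hi).2.1, fun i _ => (f i).1.2,
    fun i _ => (f i).2.2, by simp [h0], by simp [hk], by simp [h0], by simp [hk],
    fun i hi => (hs i hi).2.2⟩
  rcases Nat.eq_zero_or_pos k with rfl | hpos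
  · exact absurd (congrArg Prod.fst (h0.symm.trans hk)) (NestGraph.apart_ne hab)
  · exact hpos

end LoopGraph

/-! ### Arcs -/

lemma arcs_meet_of_le {a b c d : ℝ} (ha : a ∈ Set.Ico (0 : ℝ) 1) (hc : c ∈ Set.Ico (0 : ℝ) 1)
    (hab : a ≤ b) (hcd : c ≤ d) :
    (∃ t ∈ Set.Ico (0 : ℝ) 1, arcMem a b t ∧ arcMem c d t) ↔ a ≤ d ∧ c ≤ b := by
  simp only [arcMem, hab, hcd, hab.not_gt, hcd.not_gt, true_and, false_and, or_false]
  constructor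
  · rintro ⟨t, -, h1, h2⟩
    exact ⟨h1.1.trans h2.2, h2.1.trans h1.2⟩
  · rintro ⟨h1, h2⟩
    rcases le_total a c with h | h
    · exact ⟨c, hc, ⟨h, h2⟩, le_rfl, hcd⟩
    · exact ⟨a, ha, ⟨le_rfl, hab⟩, h, h1⟩

lemma arcs_meet_of_gt {a b c d : ℝ} (ha : a ∈ Set.Ico (0 : ℝ) 1) (hb : b ∈ Set.Ico (0 : ℝ) 1)
    (hab : a ≤ b) (hdc : d < c) :
    (∃ t ∈ Set.Ico (0 : ℝ) 1, arcMem a b t ∧ arcMem c d t) ↔ c ≤ b ∨ a ≤ d := by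
  simp only [arcMem, hab, hdc, hab.not_gt, hdc.not_ge, true_and, false_and, or_false, false_or]
  constructor
  · rintro ⟨t, -, h1, h2⟩
    exact h2.imp (fun h => h.trans h1.2) h1.1.trans
  · rintro (h | h)
    · exact ⟨b, hb, ⟨hab, le_rfl⟩, .inl h⟩
    · exact ⟨a, ha, ⟨le_rfl, hab⟩, .inr h⟩

lemma arcs_meet_of_gt_gt {a b c d : ℝ} (hb : 0 ≤ b) (hd : 0 ≤ d) (hba : b < a) (hdc : d < c) :
    ∃ t ∈ Set.Ico (0 : ℝ) 1, arcMem a b t ∧ arcMem c d t :=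
  ⟨0, by simp, .inr ⟨hba, .inr hb⟩, .inr ⟨hdc, .inr hd⟩⟩

/-- If a circularly-paired graph with no true twins has a non-inverting
set containing exactly one vertex of every circular pair, then it is a circular-arc
graph. -/
theorem circularArc_of_nonInvertingSet
    {V : Type} [Fintype V] (G : LoopGraph V)
    (ht : ∀ u v, ¬ G.TrueTwins u v) (hp : G.CircularlyPaired)
    (X : Set V) (hX : G.NonInvertingSet X)
    (hexact : ∀ u v, G.CircularPair u v → ((u ∈ X ∧ v ∉ X) ∨ (u ∉ X ∧ v ∈ X))) :
    G.IsCircularArc := by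
  classical
  obtain ⟨ρ, hinj, hlr, hadj, hsub⟩ :=
    NestGraph.exists_interval_rep (G.toNest_not_rel ht X hX)
  have hnest : ∀ a b : X, G.nbhd a ⊆ G.nbhd b ↔
      ρ (.inl b) ≤ ρ (.inl a) ∧ ρ (.inr a) ≤ ρ (.inr b) := fun a b => by
    rw [← hsub a b]
    constructor
    · intro h
      by_cases he : a = b
      · exact .inl he
      · exact .inr ⟨he, h⟩
    · rintro (rfl | h)
      exacts [subset_rfl, h.2]
  choose p hp using hp
  have hpX : ∀ u, u ∉ X → p u ∈ X := fun u hu => by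
    have := hexact u (p u) (hp u)
    tauto
  -- The circle is cut into `M` equal steps; endpoints of `X` sit at multiples of `4`, and a
  -- vertex outside `X` gets the complement of its partner's interval, shrunk by one step.
  obtain ⟨B, hB⟩ : ∃ B, ∀ x, ρ x < B :=
    ⟨_, fun x => Nat.lt_succ_of_le (Finset.le_sup (f := ρ) (Finset.mem_univ x))⟩
  let L : V → ℕ := fun u => if h : u ∈ X then 4 * ρ (.inl ⟨u, h⟩) + 4
    else 4 * ρ (.inr ⟨p u, hpX u h⟩) + 5
  let R : V → ℕ := fun u => if h : u ∈ X then 4 * ρ (.inr ⟨u, h⟩) + 4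
    else 4 * ρ (.inl ⟨p u, hpX u h⟩) + 3
  have L1 : ∀ u (h : u ∈ X), L u = 4 * ρ (.inl ⟨u, h⟩) + 4 := fun u h => dif_pos h
  have R1 : ∀ u (h : u ∈ X), R u = 4 * ρ (.inr ⟨u, h⟩) + 4 := fun u h => dif_pos h
  have L2 : ∀ u (h : u ∉ X), L u = 4 * ρ (.inr ⟨p u, hpX u h⟩) + 5 := fun u h => dif_neg h
  have R2 : ∀ u (h : u ∉ X), R u = 4 * ρ (.inl ⟨p u, hpX u h⟩) + 3 := fun u h => dif_neg h
  let g : ℕ → ℝ := fun k => (k : ℝ) / (4 * B + 5 : ℕ)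
  have hM : (0 : ℝ) < (4 * B + 5 : ℕ) := by positivity
  have hg : StrictMono g := fun a b h => div_lt_div_of_pos_right (by exact_mod_cast h) hM
  have hg0 : ∀ k < 4 * B + 5, g k ∈ Set.Ico (0 : ℝ) 1 := fun k hk =>
    ⟨by positivity, (div_lt_one hM).2 (by exact_mod_cast hk)⟩
  have hL : ∀ u, g (L u) ∈ Set.Ico (0 : ℝ) 1 := fun u => hg0 _ <| by
    by_cases h : u ∈ X
    · have := hB (.inl ⟨u, h⟩)
      rw [L1 u h]
      omega
    · have := hB (.inr ⟨p u, hpX u h⟩)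
      rw [L2 u h]
      omega
  have hR : ∀ u, g (R u) ∈ Set.Ico (0 : ℝ) 1 := fun u => hg0 _ <| by
    by_cases h : u ∈ X
    · have := hB (.inr ⟨u, h⟩)
      rw [R1 u h]
      omega
    · have := hB (.inl ⟨p u, hpX u h⟩)
      rw [R2 u h]
      omega
  have pinj : ∀ u v, p u = p v → u = v := fun u v h =>
    (hp u).symm.unique ht (h ▸ (hp v).symm)
  have hLR : Function.Injective (Sum.elim L R) := by
    have mixed : ∀ u v, L u ≠ R v := fun u v he => by
      by_cases hu : u ∈ X <;> by_cases hv : v ∈ X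
      · rw [L1 u hu, R1 v hv] at he
        exact Sum.inl_ne_inr (hinj (by omega : ρ (.inl ⟨u, hu⟩) = ρ (.inr ⟨v, hv⟩)))
      · rw [L1 u hu, R2 v hv] at he
        omega
      · rw [L2 u hu, R1 v hv] at he
        omega
      · rw [L2 u hu, R2 v hv] at he
        omega
    refine Function.Injective.sumElim ?_ ?_ mixed
    · intro u v he
      by_cases hu : u ∈ X <;> by_cases hv : v ∈ X
      · rw [L1 u hu, L1 v hv] at he
        simpa using hinj (by omega : ρ (.inl ⟨u, hu⟩) = ρ (.inl ⟨v, hv⟩))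
      · rw [L1 u hu, L2 v hv] at he
        omega
      · rw [L2 u hu, L1 v hv] at he
        omega
      · rw [L2 u hu, L2 v hv] at he
        have h := hinj (by omega : ρ (.inr ⟨p u, hpX u hu⟩) = ρ (.inr ⟨p v, hpX v hv⟩))
        exact pinj u v (by simpa using h)
    · intro u v he
      by_cases hu : u ∈ X <;> by_cases hv : v ∈ X
      · rw [R1 u hu, R1 v hv] at he
        simpa using hinj (by omega : ρ (.inr ⟨u, hu⟩) = ρ (.inr ⟨v, hv⟩))
      · rw [R1 u hu, R2 v hv] at he
        omega
      · rw [R2 u hu, R1 v hv] at he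
        omega
      · rw [R2 u hu, R2 v hv] at he
        have h := hinj (by omega : ρ (.inl ⟨p u, hpX u hu⟩) = ρ (.inl ⟨p v, hpX v hv⟩))
        exact pinj u v (by simpa using h)
  have inside : ∀ u, u ∈ X → L u ≤ R u := fun u hu => by
    have := hlr ⟨u, hu⟩
    rw [L1 u hu, R1 u hu]
    omega
  have outside : ∀ u, u ∉ X → R u < L u := fun u hu => by
    have := hlr ⟨p u, hpX u hu⟩
    rw [L2 u hu, R2 u hu]
    omega
  have hmixed : ∀ u v, u ∈ X → v ∉ X → (G.Adj u v ↔ ∃ t ∈ Set.Ico (0 : ℝ) 1,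
      arcMem (g (L u)) (g (R u)) t ∧ arcMem (g (L v)) (g (R v)) t) := fun u v hu hv => by
    rw [arcs_meet_of_gt (hL u) (hR u) (hg.monotone (inside u hu)) (hg (outside v hv)),
      hg.le_iff_le, hg.le_iff_le, (hp v).symm.adj_iff u,
      show G.nbhd u ⊆ G.nbhd (p v) ↔ _ from hnest ⟨u, hu⟩ ⟨p v, hpX v hv⟩,
      L1 u hu, R1 u hu, L2 v hv, R2 v hv]
    omega
  refine ⟨fun u => g (L u), fun u => g (R u), hL, hR, ?_, fun u v => ?_⟩
  · convert hg.injective.comp hLR using 1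
    ext (u | u) <;> rfl
  by_cases hu : u ∈ X <;> by_cases hv : v ∈ X
  · rw [arcs_meet_of_le (hL u) (hL v) (hg.monotone (inside u hu)) (hg.monotone (inside v hv)),
      hg.le_iff_le, hg.le_iff_le, show G.Adj u v ↔ _ from hadj ⟨u, hu⟩ ⟨v, hv⟩]
    have h1 : ρ (.inl ⟨u, hu⟩) ≠ ρ (.inr ⟨v, hv⟩) := fun h => Sum.inl_ne_inr (hinj h)
    have h2 : ρ (.inl ⟨v, hv⟩) ≠ ρ (.inr ⟨u, hu⟩) := fun h => Sum.inl_ne_inr (hinj h)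
    rw [L1 u hu, R1 u hu, L1 v hv, R1 v hv]
    omega
  · exact hmixed u v hu hv
  · rw [show G.Adj u v ↔ G.Adj v u from ⟨G.symm _ _, G.symm _ _⟩, hmixed v u hv hu]
    exact exists_congr fun t => and_congr_right fun _ => and_comm
  · exact iff_of_true
      (LoopGraph.adj_partners hX.1 hexact (hpX u hu) (hpX v hv) (hp u).symm (hp v).symm)
      (arcs_meet_of_gt_gt (hR u).1 (hR v).1 (hg (outside u hu)) (hg (outside v hv)))
end
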